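/- arXiv:2201.03129 — 2 statements merged into one kernel-verified Lean document; each statement's English description precedes it below -/
import Mathlib

section
/- Let u_1,...,u_n, v_1,...,v_n be odd (pairwise anticommuting) variables in the exterior algebra over an integral domain of characteristic ≠ 2, with n ≥ 2. Then det(f_0 + f_1 t u_i v_j)_{i,j=1}^n = t^n(−1)^{C(n,2)} n! f_1^n · u_1···u_n · v_1···v_n + t^{n−1}(−1)^{C(n−1,2)}(n−1)! f_0 f_1^{n−1} · (Σ_{i=1}^n (−1)^{i−1} u_1···û_i···u_n) · (Σ_{j=1}^n (−1)^{j−1} v_1···v̂_j···v_n). In particular all coefficients of t^k for 0 ≤ k ≤ n−2 vanish. -/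
/-!
Expand the determinant multilinearly in the rows `(f₀, …, f₀) + t f₁ u_i (v_1, …, v_n)`. If two
rows `a ≠ b` are taken to be the constant one, the terms of `σ` and `σ * swap a b` cancel; hence at
most one constant row survives, which leaves only `t ^ n` and `t ^ (n - 1)`. Laplace expansion
along the constant row turns the second part into an alternating sum of minors of `(u_i v_j)`. In
`det (u_i v_j)` of size `m`, the sign of `σ` cancels against the sign of reordering the `v_{σ i}`,
so all `m!` Leibniz terms are equal, and sorting `u_1 v_1 ⋯ u_m v_m` into `u_1 ⋯ u_m v_1 ⋯ v_m`
costs `(-1) ^ m.choose 2`.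
-/

section Monoid

variable {M : Type*} [Monoid M]

theorem prod_ofFn_smul {k : Type*} [Monoid k] [MulAction k M] [IsScalarTower k M M]
    [SMulCommClass k M M] {n : ℕ} (b : k) (u : Fin n → M) :
    (List.ofFn fun i => b • u i).prod = b ^ n • (List.ofFn u).prod := by
  simpa [List.map_ofFn, Function.comp_def] using (List.smul_prod (List.ofFn u) b).symm

theorem prod_ofFn_eq_mul_prod_succAbove {n : ℕ} (i : Fin (n + 1)) (f : Fin (n + 1) → M)
    (h : ∀ j < i, Commute (f i) (f j)) :
    (List.ofFn f).prod = f i * (List.ofFn (f ∘ i.succAbove)).prod := by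
  induction n with
  | zero => simp [Subsingleton.elim (α := Fin 1) i 0]
  | succ n ih =>
    cases i using Fin.cases with
    | zero => simp [List.ofFn_succ]
    | succ i =>
      have htail := ih i (f ∘ Fin.succ) fun j hj => h j.succ (Fin.succ_lt_succ_iff.mpr hj)
      simp only [Function.comp_def] at htail ⊢
      rw [List.ofFn_succ, List.prod_cons, htail, List.ofFn_succ (n := n), List.prod_cons,
        Fin.succ_succAbove_zero]
      simp only [Fin.succ_succAbove_succ]
      exact (h 0 i.succ_pos).symm.left_comm _

theorem prod_ofFn_comp_swap_castSucc_succ [HasDistribNeg M] {n : ℕ} (i : Fin n)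
    (v : Fin (n + 1) → M)
    (h : v i.succ * v i.castSucc = -(v i.castSucc * v i.succ)) :
    (List.ofFn (v ∘ Equiv.swap i.castSucc i.succ)).prod = -(List.ofFn v).prod := by
  induction n with
  | zero => exact i.elim0
  | succ n ih =>
    cases i using Fin.cases with
    | zero =>
      have hfix (k : Fin n) : Equiv.swap (0 : Fin (n + 2)) 1 k.succ.succ = k.succ.succ :=
        Equiv.swap_apply_of_ne_of_ne (Fin.succ_ne_zero _)
          ((Fin.succ_injective _).ne k.succ_ne_zero)
      simp only [Fin.castSucc_zero, Fin.succ_zero_eq_one] at h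
      simp [List.ofFn_succ, hfix, ← mul_assoc, h]
    | succ i =>
      have hfix : Equiv.swap i.succ.castSucc i.succ.succ 0 = 0 :=
        Equiv.swap_apply_of_ne_of_ne (by simp [Fin.ext_iff]) (Fin.succ_ne_zero _).symm
      have hsucc (k : Fin (n + 1)) : Equiv.swap i.succ.castSucc i.succ.succ k.succ =
          (Equiv.swap i.castSucc i.succ k).succ := by
        rw [← Fin.succ_castSucc, (Fin.succ_injective _).map_swap]
      have htail := ih i (v ∘ Fin.succ) h
      simp only [Function.comp_def] at htail ⊢
      rw [List.ofFn_succ, List.prod_cons, List.ofFn_succ (f := v), List.prod_cons]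
      simp only [hfix, hsucc, htail, mul_neg]

end Monoid

section Ring

variable {A : Type*} [Ring A]

theorem prod_ofFn_comp_perm {n : ℕ} (σ : Equiv.Perm (Fin n)) (v : Fin n → A)
    (hv : Pairwise fun i j => v i * v j = -(v j * v i)) :
    (List.ofFn (v ∘ σ)).prod = (Equiv.Perm.sign σ : ℤ) • (List.ofFn v).prod := by
  cases n with
  | zero => simp [Subsingleton.elim σ 1]
  | succ n =>
    have hσ : σ ∈ Submonoid.closure
        (Set.range fun i : Fin n => Equiv.swap i.castSucc i.succ) := by
      rw [Equiv.Perm.mclosure_swap_castSucc_succ]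
      exact Submonoid.mem_top σ
    induction hσ using Submonoid.closure_induction generalizing v with
    | mem τ hτ =>
      obtain ⟨i, rfl⟩ := hτ
      have hne : i.castSucc ≠ i.succ := i.castSucc_lt_succ.ne
      rw [prod_ofFn_comp_swap_castSucc_succ i v (hv hne.symm), Equiv.Perm.sign_swap hne]
      simp
    | one => simp
    | mul τ ρ _ _ hτ hρ =>
      rw [Equiv.Perm.coe_mul, ← Function.comp_assoc,
        hρ (v ∘ τ) (fun i j hij => hv (τ.injective.ne hij)), hτ v hv, smul_smul,
        Equiv.Perm.sign_mul, mul_comm, Units.val_mul]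

theorem prod_ofFn_mul_comm_of_anticomm {n : ℕ} (u : Fin n → A) (w : A)
    (h : ∀ i, u i * w = -(w * u i)) :
    (List.ofFn u).prod * w = (-1 : ℤ) ^ n • (w * (List.ofFn u).prod) := by
  induction n with
  | zero => simp
  | succ n ih =>
    rw [List.ofFn_succ, List.prod_cons, mul_assoc, ih _ fun i => h i.succ, mul_smul_comm,
      ← mul_assoc, h 0, pow_succ, mul_smul, neg_mul, mul_assoc, neg_one_zsmul]

theorem prod_ofFn_mul_distrib_of_anticomm {n : ℕ} (u w : Fin n → A)
    (h : ∀ i j, u i * w j = -(w j * u i)) :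
    (List.ofFn fun i => u i * w i).prod =
      (-1 : ℤ) ^ n.choose 2 • ((List.ofFn u).prod * (List.ofFn w).prod) := by
  induction n with
  | zero => simp
  | succ n ih =>
    have hswap := prod_ofFn_mul_comm_of_anticomm (fun i : Fin n => u i.succ) (w 0) fun i => h _ _
    have hsq : (-1 : ℤ) ^ n * (-1) ^ n = 1 := by rw [← mul_pow]; simp
    set P := (List.ofFn fun i : Fin n => u i.succ).prod with hP
    set Q := (List.ofFn fun i : Fin n => w i.succ).prod with hQ
    calc (List.ofFn fun i => u i * w i).prod
        = (-1 : ℤ) ^ n.choose 2 • (u 0 * (w 0 * P) * Q) := by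
          rw [List.ofFn_succ, List.prod_cons, ih _ _ fun i j => h _ _, mul_smul_comm]
          simp only [mul_assoc, hP, hQ]
      _ = (-1 : ℤ) ^ (n + 1).choose 2 • (u 0 * (P * w 0) * Q) := by
          rw [hswap, Nat.choose_succ_succ' n 1, Nat.choose_one_right, pow_add, mul_smul_comm,
            smul_mul_assoc, smul_smul, mul_right_comm, hsq, one_mul]
      _ = _ := by
          simp only [List.ofFn_succ, List.prod_cons, mul_assoc, hP, hQ]

end Ring

section ExtendPerm

open Equiv

/-- The permutation of `Fin (n + 1)` that sends `i` to `j` and acts as `τ` between the complements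
of `i` and `j`, both identified with `Fin n` by `Fin.succAbove`. It indexes the terms of a Laplace
expansion along row `i`. -/
def extendPerm {n : ℕ} (i j : Fin (n + 1)) (τ : Perm (Fin n)) : Perm (Fin (n + 1)) :=
  j.cycleRange.symm * Perm.decomposeFin.symm (0, τ) * i.cycleRange

variable {n : ℕ} (i j : Fin (n + 1)) (τ : Perm (Fin n))

theorem extendPerm_apply_self : extendPerm i j τ i = j := by
  simp [extendPerm]

theorem extendPerm_apply_succAbove (k : Fin n) :
    extendPerm i j τ (i.succAbove k) = j.succAbove (τ k) := by
  simp [extendPerm]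

theorem sign_extendPerm :
    (Perm.sign (extendPerm i j τ) : ℤ) = (-1) ^ (i + j : ℕ) * (Perm.sign τ : ℤ) := by
  simp only [extendPerm, Perm.sign_mul, Perm.sign_symm, Fin.sign_cycleRange,
    Perm.decomposeFin.symm_sign, ↓reduceIte, one_mul, Units.val_mul, Units.val_pow_eq_pow_val,
    Units.val_neg, Units.val_one, pow_add]
  ring

theorem extendPerm_bijective : Function.Bijective fun p : Fin (n + 1) × Perm (Fin n) =>
    extendPerm i p.1 p.2 := by
  refine (Fintype.bijective_iff_injective_and_card _).mpr ⟨?_, ?_⟩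
  · rintro ⟨j, τ⟩ ⟨j', τ'⟩ (h : extendPerm i j τ = extendPerm i j' τ')
    obtain rfl : j = j' := by
      rw [← extendPerm_apply_self i j τ, h, extendPerm_apply_self]
    have hτ : τ = τ' := Equiv.ext fun k => j.succAbove_right_injective <| by
      rw [← extendPerm_apply_succAbove i, h, extendPerm_apply_succAbove]
    rw [hτ]
  · simp [Fintype.card_perm, Nat.factorial_succ]

end ExtendPerm

section RowDet

/-- The row determinant of a square matrix over a not necessarily commutative algebra: the Leibniz
sum in which the factors of each term are multiplied in the order of the rows, as a multilinear map
of the rows. `Matrix.det` does not apply to entries `u i * v j` in an exterior algebra. -/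
def rowDet (k : Type*) [CommRing k] (A : Type*) [Ring A] [Algebra k A] (n : ℕ) :
    MultilinearMap k (fun _ : Fin n => Fin n → A) A :=
  ∑ σ : Equiv.Perm (Fin n), (Equiv.Perm.sign σ : ℤ) •
    (MultilinearMap.mkPiAlgebraFin k n A).compLinearMap fun i => LinearMap.proj (σ i)

variable (k : Type*) [CommRing k] {A : Type*} [Ring A] [Algebra k A] {n : ℕ}

theorem rowDet_apply (M : Fin n → Fin n → A) :
    rowDet k A n M = ∑ σ : Equiv.Perm (Fin n), (Equiv.Perm.sign σ : ℤ) •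
      (List.ofFn fun i => M i (σ i)).prod := by
  simp [rowDet]

theorem rowDet_eq_zero_of_const_rows (M : Fin n → Fin n → A) {a b : Fin n} (hab : a ≠ b)
    (ha : ∀ i j, M a i = M a j) (hb : ∀ i j, M b i = M b j) : rowDet k A n M = 0 := by
  rw [rowDet_apply]
  refine Finset.sum_involution (fun σ _ => σ * Equiv.swap a b) ?_ ?_ (by simp) (by simp)
  · intro σ _
    have hrow (i : Fin n) : M i ((σ * Equiv.swap a b) i) = M i (σ i) := by
      rcases eq_or_ne i a with rfl | hia
      · exact ha _ _
      rcases eq_or_ne i b with rfl | hib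
      · exact hb _ _
      rw [Equiv.Perm.mul_apply, Equiv.swap_apply_of_ne_of_ne hia hib]
    simp only [hrow, Equiv.Perm.sign_mul, Equiv.Perm.sign_swap hab]
    simp
  · intro σ _ _ h
    exact hab (Equiv.swap_eq_one_iff.mp (mul_eq_left.mp h))

theorem rowDet_add_const_rows (M : Fin n → Fin n → A) (c : Fin n → A) :
    rowDet k A n (M + fun i _ => c i) =
      rowDet k A n M + ∑ i, rowDet k A n (Function.update M i fun _ => c i) := by
  rw [MultilinearMap.map_add_eq_map_add_linearDeriv_add, MultilinearMap.linearDeriv_apply,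
    add_eq_left]
  refine Finset.sum_eq_zero fun s hs => ?_
  obtain ⟨a, ha, b, hb, hab⟩ := Finset.one_lt_card.mp (Finset.mem_filter.mp hs).2
  exact rowDet_eq_zero_of_const_rows k _ hab (by simp [ha]) (by simp [hb])

theorem rowDet_succ_row_of_commute (M : Fin (n + 1) → Fin (n + 1) → A) (i : Fin (n + 1))
    (h : ∀ j, ∀ a < i, ∀ b, Commute (M i j) (M a b)) :
    rowDet k A (n + 1) M = ∑ j : Fin (n + 1), (-1 : ℤ) ^ (i + j : ℕ) •
      (M i j * rowDet k A n fun a b => M (i.succAbove a) (j.succAbove b)) := by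
  simp only [rowDet_apply, Finset.mul_sum, Finset.smul_sum]
  rw [← Fintype.sum_prod_type', ← (extendPerm_bijective i).sum_comp]
  refine Fintype.sum_congr _ _ fun ⟨j, τ⟩ => ?_
  have hprod := prod_ofFn_eq_mul_prod_succAbove i (fun a => M a (extendPerm i j τ a))
    fun a ha => h _ a ha _
  simp only [Function.comp_def, extendPerm_apply_self, extendPerm_apply_succAbove] at hprod
  rw [hprod, sign_extendPerm, mul_smul, mul_smul_comm]

theorem rowDet_algebraMap_add (M : Fin (n + 1) → Fin (n + 1) → A) (a : k) :
    rowDet k A (n + 1) (fun i j => algebraMap k A a + M i j) =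
      rowDet k A (n + 1) M + a • ∑ i : Fin (n + 1), ∑ j : Fin (n + 1), (-1 : ℤ) ^ (i + j : ℕ) •
        rowDet k A n fun p q => M (i.succAbove p) (j.succAbove q) := by
  have hadd : (fun i j => algebraMap k A a + M i j) = M + fun _ _ => algebraMap k A a := by
    ext i j; exact add_comm _ _
  rw [hadd, rowDet_add_const_rows k M fun _ => algebraMap k A a, Finset.smul_sum]
  congr 1
  refine Fintype.sum_congr _ _ fun i => ?_
  rw [rowDet_succ_row_of_commute k _ i fun j p _ q => by
    simpa using Algebra.commute_algebraMap_left a _, Finset.smul_sum]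
  refine Fintype.sum_congr _ _ fun j => ?_
  simp only [Function.update_self, Function.update_of_ne (Fin.succAbove_ne _ _),
    ← Algebra.smul_def, smul_comm a]

end RowDet

section AlternatingOmitSum

/-- The alternating sum `∑ i, (-1) ^ i u₀ ⋯ ûᵢ ⋯ uₙ` of the products with one factor omitted. The
product of two of these is what the signed sum of all maximal proper minors of `(u i * v j)`
reduces to. -/
def alternatingOmitSum {A : Type*} [Ring A] {n : ℕ} (u : Fin (n + 1) → A) : A :=
  ∑ i : Fin (n + 1), (-1 : ℤ) ^ (i : ℕ) • (List.ofFn (u ∘ i.succAbove)).prod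

theorem sort_univ_erase {n : ℕ} (i : Fin (n + 1)) :
    ((Finset.univ : Finset (Fin (n + 1))).erase i).sort (· ≤ ·) = List.ofFn i.succAbove := by
  refine (Finset.sortedLT_sort _).eq_of_mem_iff (Fin.strictMono_succAbove i).sortedLT_ofFn ?_
  simp [List.mem_ofFn, Fin.exists_succAbove_eq_iff]

theorem alternatingOmitSum_eq_sum_sort {A : Type*} [Ring A] {n : ℕ} (u : Fin (n + 1) → A) :
    alternatingOmitSum u = ∑ i : Fin (n + 1), (-1 : A) ^ (i : ℕ) *
      ((((Finset.univ : Finset (Fin (n + 1))).erase i).sort (· ≤ ·)).map u).prod := by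
  simp [alternatingOmitSum, sort_univ_erase, List.map_ofFn]

theorem map_alternatingOmitSum {A B : Type*} [Ring A] [Ring B] (f : A →+* B) {n : ℕ}
    (u : Fin (n + 1) → A) : f (alternatingOmitSum u) = alternatingOmitSum (f ∘ u) := by
  simp [alternatingOmitSum, map_list_prod, List.map_ofFn, Function.comp_assoc]

theorem alternatingOmitSum_smul {k A : Type*} [CommRing k] [Ring A] [Algebra k A] (b : k) {n : ℕ}
    (u : Fin (n + 1) → A) :
    alternatingOmitSum (fun i => b • u i) = b ^ n • alternatingOmitSum u := by
  simp only [alternatingOmitSum, Function.comp_def, prod_ofFn_smul, Finset.smul_sum,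
    smul_comm (_ : ℤ) (b ^ n)]

end AlternatingOmitSum

section Anticommuting

variable {k : Type*} [CommRing k] {A : Type*} [Ring A] [Algebra k A] {n : ℕ}

theorem rowDet_mul_of_anticomm (u v : Fin n → A)
    (hv : Pairwise fun i j => v i * v j = -(v j * v i))
    (huv : ∀ i j, u i * v j = -(v j * u i)) :
    rowDet k A n (fun i j => u i * v j) =
      ((-1) ^ n.choose 2 * n.factorial : ℤ) • ((List.ofFn u).prod * (List.ofFn v).prod) := by
  have hterm (σ : Equiv.Perm (Fin n)) :
      (Equiv.Perm.sign σ : ℤ) • (List.ofFn fun i => u i * v (σ i)).prod =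
        (-1 : ℤ) ^ n.choose 2 • ((List.ofFn u).prod * (List.ofFn v).prod) := by
    have hprod := prod_ofFn_mul_distrib_of_anticomm u (v ∘ σ) fun i j => huv i (σ j)
    simp only [prod_ofFn_comp_perm σ v hv, Function.comp_apply] at hprod
    rw [hprod, mul_smul_comm, smul_comm, smul_smul, smul_smul, mul_assoc, ← Units.val_mul]
    simp
  rw [rowDet_apply, Fintype.sum_congr _ _ hterm, Finset.sum_const, Finset.card_univ,
    Fintype.card_perm, Fintype.card_fin, ← natCast_zsmul, smul_smul, mul_comm]

theorem rowDet_algebraMap_add_mul_of_anticomm (a : k) (u v : Fin (n + 1) → A)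
    (hv : Pairwise fun i j => v i * v j = -(v j * v i))
    (huv : ∀ i j, u i * v j = -(v j * u i)) :
    rowDet k A (n + 1) (fun i j => algebraMap k A a + u i * v j) =
      ((-1) ^ (n + 1).choose 2 * (n + 1).factorial : ℤ) •
        ((List.ofFn u).prod * (List.ofFn v).prod) +
      ((-1) ^ n.choose 2 * n.factorial : ℤ) •
        a • (alternatingOmitSum u * alternatingOmitSum v) := by
  have hminor (i j : Fin (n + 1)) :
      rowDet k A n (fun p q => u (i.succAbove p) * v (j.succAbove q)) =
        ((-1) ^ n.choose 2 * n.factorial : ℤ) •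
          ((List.ofFn (u ∘ i.succAbove)).prod * (List.ofFn (v ∘ j.succAbove)).prod) :=
    rowDet_mul_of_anticomm _ _ (fun p q hpq => hv (j.succAbove_right_injective.ne hpq))
      fun _ _ => huv _ _
  rw [rowDet_algebraMap_add k (fun i j => u i * v j) a, rowDet_mul_of_anticomm u v hv huv]
  congr 1
  rw [smul_comm _ a]
  simp only [hminor, alternatingOmitSum, Finset.sum_mul_sum, Finset.smul_sum, pow_add,
    smul_mul_smul_comm]
  simp only [smul_comm (_ * _ : ℤ) ((-1) ^ n.choose 2 * n.factorial : ℤ)]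

theorem rowDet_algebraMap_add_smul_mul_of_anticomm (a b : k) (u v : Fin (n + 1) → A)
    (hv : Pairwise fun i j => v i * v j = -(v j * v i))
    (huv : ∀ i j, u i * v j = -(v j * u i)) :
    rowDet k A (n + 1) (fun i j => algebraMap k A a + b • (u i * v j)) =
      ((-1) ^ (n + 1).choose 2 * (n + 1).factorial : ℤ) •
        b ^ (n + 1) • ((List.ofFn u).prod * (List.ofFn v).prod) +
      ((-1) ^ n.choose 2 * n.factorial : ℤ) •
        (a * b ^ n) • (alternatingOmitSum u * alternatingOmitSum v) := by
  have h := rowDet_algebraMap_add_mul_of_anticomm (k := k) a (fun i => b • u i) v hv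
    fun i j => by rw [smul_mul_assoc, huv, smul_neg, mul_smul_comm]
  rw [prod_ofFn_smul, alternatingOmitSum_smul] at h
  simpa only [smul_mul_assoc, mul_smul] using h

end Anticommuting

open Polynomial in
theorem stmt6_general (R : Type*) [CommRing R] (Λ : Type*) [Ring Λ] [Algebra R Λ]
    (n : ℕ) (hn : n ≠ 0) (u v : Fin n → Λ)
    (hv : Pairwise fun i j => v i * v j = -(v j * v i))
    (huv : ∀ i j, u i * v j = -(v j * u i)) (f0 f1 : R) :
    (∑ σ : Equiv.Perm (Fin n), (Equiv.Perm.sign σ : ℤ) •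
      ((List.finRange n).map (fun i =>
        C (algebraMap R Λ f0) +
        C (algebraMap R Λ f1) * X *
          C (u i) * C (v (σ i)))).prod) =
    X ^ n * ((-1 : Λ[X]) ^ (n.choose 2) * (n.factorial : Λ[X]) *
      C (algebraMap R Λ (f1 ^ n)) *
      C (((List.finRange n).map u).prod) *
      C (((List.finRange n).map v).prod)) +
    X ^ (n - 1) * ((-1 : Λ[X]) ^ ((n - 1).choose 2) *
      ((n - 1).factorial : Λ[X]) *
      C (algebraMap R Λ (f0 * f1 ^ (n - 1))) *
      C (∑ i : Fin n, (-1 : Λ) ^ (i : ℕ) *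
        ((((Finset.univ : Finset (Fin n)).erase i).sort (· ≤ ·)).map u).prod) *
      C (∑ j : Fin n, (-1 : Λ) ^ (j : ℕ) *
        ((((Finset.univ : Finset (Fin n)).erase j).sort (· ≤ ·)).map v).prod)) := by
  obtain ⟨m, rfl⟩ := Nat.exists_eq_add_one_of_ne_zero hn
  let _ : Algebra R[X] Λ[X] := Polynomial.algebra R Λ
  have hscalar (p : R[X]) : algebraMap R[X] Λ[X] p = p.map (algebraMap R Λ) := rfl
  have hX (k : ℕ) (s p q : Λ[X]) : X ^ k * (s * p * q) = s * X ^ k * p * q := by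
    rw [mul_assoc s, ← mul_assoc, X_pow_mul, ← mul_assoc]
  have hdet := rowDet_algebraMap_add_smul_mul_of_anticomm (C f0) (C f1 * X : R[X])
    (C ∘ u) (C ∘ v)
    (fun i j hij => by simp only [Function.comp_apply, ← C_mul, hv hij, C_neg])
    (fun i j => by simp only [Function.comp_apply, ← C_mul, huv, C_neg])
  simp only [rowDet_apply, Algebra.smul_def, hscalar, mul_pow, Polynomial.map_mul,
    Polynomial.map_pow, map_C, map_X, Function.comp_apply, ← mul_assoc, eq_intCast] at hdet
  simp only [← List.ofFn_eq_map, ← alternatingOmitSum_eq_sum_sort, Nat.add_sub_cancel,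
    map_alternatingOmitSum, map_list_prod, List.map_ofFn, zsmul_eq_mul, hX]
  rw [hdet]
  push_cast
  simp only [map_mul, map_pow, mul_assoc]

/-- Fermionic determinant identity: for pairwise anticommuting odd variables
`u_1,…,u_n, v_1,…,v_n` (squaring to zero) over an integral domain of characteristic ≠ 2,
`det (f_0 + f_1 t u_i v_j) = t^n (-1)^{C(n,2)} n! f_1^n u_1⋯u_n v_1⋯v_n
 + t^{n-1} (-1)^{C(n-1,2)} (n-1)! f_0 f_1^{n-1}
   (∑_i (-1)^{i-1} u_1⋯û_i⋯u_n)(∑_j (-1)^{j-1} v_1⋯v̂_j⋯v_n)`,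
with the determinant given by the Leibniz sum (the entries pairwise commute). -/
theorem stmt6 (R : Type*) [CommRing R] [IsDomain R] (h2 : (2 : R) ≠ 0)
    (Λ : Type*) [Ring Λ] [Algebra R Λ] (n : ℕ) (hn : 2 ≤ n)
    (u v : Fin n → Λ)
    (hu : ∀ i j, u i * u j = -(u j * u i)) (hu2 : ∀ i, u i * u i = 0)
    (hv : ∀ i j, v i * v j = -(v j * v i)) (hv2 : ∀ i, v i * v i = 0)
    (huv : ∀ i j, u i * v j = -(v j * u i)) (f0 f1 : R) :
    (∑ σ : Equiv.Perm (Fin n), (Equiv.Perm.sign σ : ℤ) •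
      ((List.finRange n).map (fun i =>
        Polynomial.C (algebraMap R Λ f0) +
        Polynomial.C (algebraMap R Λ f1) * Polynomial.X *
          Polynomial.C (u i) * Polynomial.C (v (σ i)))).prod) =
    Polynomial.X ^ n * ((-1 : Polynomial Λ) ^ (n.choose 2) * (n.factorial : Polynomial Λ) *
      Polynomial.C (algebraMap R Λ (f1 ^ n)) *
      Polynomial.C (((List.finRange n).map u).prod) *
      Polynomial.C (((List.finRange n).map v).prod)) +
    Polynomial.X ^ (n - 1) * ((-1 : Polynomial Λ) ^ ((n - 1).choose 2) *
      ((n - 1).factorial : Polynomial Λ) *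
      Polynomial.C (algebraMap R Λ (f0 * f1 ^ (n - 1))) *
      Polynomial.C (∑ i : Fin n, (-1 : Λ) ^ (i : ℕ) *
        ((((Finset.univ : Finset (Fin n)).erase i).sort (· ≤ ·)).map u).prod) *
      Polynomial.C (∑ j : Fin n, (-1 : Λ) ^ (j : ℕ) *
        ((((Finset.univ : Finset (Fin n)).erase j).sort (· ≤ ·)).map v).prod)) := by
  exact stmt6_general R Λ n (by lia) u v (fun i j _ => hv i j) huv f0 f1
end

section
/- Dual Cauchy product identity: for commuting variables u_1,...,u_n, v_1,...,v_n, ∏_{i=1}^n ∏_{j=1}^n (1 + u_i v_j) = Σ_m s_m(u) s_{m'}(v), where the sum is over all partitions m fitting in an n×n box (i.e., with at most n parts each of size at most n), m' is the conjugate (dual) partition, and s denotes the Schur polynomial in n variables. -/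
open scoped Classical

/-!
Evaluate, in two ways, the determinant of the `(n + k) × (n + k)` matrix with columns `(-uᵢ) ^ r`
and `vⱼ ^ (n + k - 1 - r)`, where `r` indexes the rows. It is a projective Vandermonde determinant,
hence equals the Vandermonde products of `u` and `v` times `∏ (1 + uᵢ vⱼ)`. Laplace expansion along
the two groups of columns writes it as a sum over the `n`-subsets of the rows. These subsets are the
sets `{mᵢ + n - i}` attached to the partitions `m` in the `n × k` box, the complement being the set
of the conjugate partition read backwards, and the sign of the corresponding shuffle cancels the
signs contributed by the `-uᵢ`.
-/

namespace DualCauchy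

open Equiv Finset Function

section LaplaceExpansion

lemma bijective_mul_of_bijective_quotient_range {ι G H : Type*} [Group G] [Group H] {φ : H →* G}
    (hφ : Injective φ) {f : ι → G} (hf : Bijective fun t ↦ (f t : G ⧸ φ.range)) :
    Bijective fun x : ι × H ↦ f x.1 * φ x.2 := by
  constructor
  · rintro ⟨s, a⟩ ⟨t, b⟩ (h : f s * φ a = f t * φ b)
    obtain rfl : s = t := by
      refine hf.injective (QuotientGroup.eq.mpr ⟨a * b⁻¹, ?_⟩)
      rw [map_mul, map_inv, mul_inv_eq_iff_eq_mul, mul_assoc, ← h, inv_mul_cancel_left]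
    rw [hφ (mul_left_cancel h)]
  · intro g
    obtain ⟨t, ht⟩ := hf.surjective g
    obtain ⟨a, ha⟩ := QuotientGroup.eq.mp ht
    exact ⟨(t, a), by simp only [ha, mul_inv_cancel_left]⟩

lemma modSumCongr_mk_eq_iff {α β : Type*} [Finite α] [Finite β] {σ τ : Perm (α ⊕ β)} :
    (σ : Perm.ModSumCongr α β) = τ ↔ Set.range (σ ∘ Sum.inl) = Set.range (τ ∘ Sum.inl) := by
  rw [QuotientGroup.eq]
  constructor
  · rintro ⟨⟨a, b⟩, h⟩
    have hτ : τ ∘ Sum.inl = (σ ∘ Sum.inl) ∘ a := by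
      rw [← eq_inv_mul_iff_mul_eq.mp h]
      rfl
    rw [hτ, a.surjective.range_comp]
  · intro h
    refine Perm.mem_sumCongrHom_range_of_perm_mapsTo_inl ?_
    rintro _ ⟨a, rfl⟩
    obtain ⟨b, hb⟩ : τ (Sum.inl a) ∈ Set.range (σ ∘ Sum.inl) := h ▸ Set.mem_range_self a
    exact ⟨b, by simp [← hb]⟩

theorem det_eq_sum_sign_mul_det_mul_det {α β ι R : Type*} [Fintype α] [Fintype β] [DecidableEq α]
    [DecidableEq β] [Fintype ι] [CommRing R] {e : ι → Perm (α ⊕ β)}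
    (he : Bijective fun t ↦ (e t : Perm.ModSumCongr α β)) (M : Matrix (α ⊕ β) (α ⊕ β) R) :
    M.det = ∑ t, ((e t).sign : R) * (M.submatrix (e t ∘ Sum.inl) Sum.inl).det *
      (M.submatrix (e t ∘ Sum.inr) Sum.inr).det := by
  have hbij := bijective_mul_of_bijective_quotient_range Perm.sumCongrHom_injective he
  rw [Matrix.det_apply', ← hbij.sum_comp, Fintype.sum_prod_type]
  refine Fintype.sum_congr _ _ fun t ↦ ?_
  rw [Matrix.det_apply', Matrix.det_apply', mul_assoc, Finset.sum_mul_sum, Fintype.sum_prod_type,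
    Finset.mul_sum]
  refine Fintype.sum_congr _ _ fun σ ↦ ?_
  rw [Finset.mul_sum]
  refine Fintype.sum_congr _ _ fun τ ↦ ?_
  simp only [Perm.sign_mul, Perm.sumCongrHom_apply, Perm.sign_sumCongr, Fintype.prod_sum_type,
    Perm.mul_apply, Perm.sumCongr_apply, Sum.map_inl, Sum.map_inr, Matrix.submatrix_apply,
    comp_apply, Units.val_mul, Int.cast_mul]
  ring

end LaplaceExpansion

lemma prod_prod_Ioi_fin_add {n k : ℕ} {M : Type*} [CommMonoid M]
    (f : Fin (n + k) → Fin (n + k) → M) :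
    ∏ i, ∏ j ∈ Ioi i, f i j =
      (∏ i : Fin n, ∏ j ∈ Ioi i, f (Fin.castAdd k i) (Fin.castAdd k j)) *
      (∏ i : Fin n, ∏ j : Fin k, f (Fin.castAdd k i) (Fin.natAdd n j)) *
      ∏ i : Fin k, ∏ j ∈ Ioi i, f (Fin.natAdd n i) (Fin.natAdd n j) := by
  have hlt (i : Fin n) (j : Fin k) : Fin.castAdd k i < Fin.natAdd n j := by
    rw [Fin.lt_def, Fin.val_castAdd, Fin.val_natAdd]
    omega
  have hnlt (i : Fin n) (j : Fin k) : ¬ Fin.natAdd n j < Fin.castAdd k i := (hlt i j).not_gt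
  simp only [← filter_lt_eq_Ioi, prod_filter, Fin.prod_univ_add, hlt, hnlt, if_true, if_false,
    prod_const_one, mul_one, mul_assoc, (Fin.strictMono_castAdd k).lt_iff_lt,
    Fin.natAdd_lt_natAdd_iff, prod_mul_distrib]

lemma antitone_val_add_val_of_strictAnti {n N : ℕ} {f : Fin n → Fin N} (hf : StrictAnti f) :
    Antitone fun i ↦ (f i : ℕ) + i := by
  cases n with
  | zero => exact Subsingleton.antitone _
  | succ n =>
    refine Fin.antitone_iff_succ_le.mpr fun i ↦ ?_
    have : (f i.succ : ℕ) < f i.castSucc := hf i.castSucc_lt_succ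
    simp only [Fin.val_succ, Fin.val_castSucc]
    omega

/-- Partitions contained in the `n × k` box: at most `n` parts, each at most `k`. They are encoded
with exactly `n` parts, padded by zeros, in weakly decreasing order. -/
def BoxPartition (n k : ℕ) : Type :=
  {m : Fin n → Fin (k + 1) // Antitone m}

namespace BoxPartition

variable {n k : ℕ}

instance : Fintype (BoxPartition n k) :=
  inferInstanceAs (Fintype {m : Fin n → Fin (k + 1) // Antitone m})

/-- The parts `m₁ ≥ ⋯ ≥ mₙ` of a partition in a box, as natural numbers. -/
def part (m : BoxPartition n k) (i : Fin n) : ℕ := m.1 i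

lemma sum_eq_sum_dite {M : Type*} [AddCommMonoid M] (f : BoxPartition n k → M) :
    ∑ m, f m =
      ∑ m : Fin n → Fin (k + 1), if h : Antitone (fun i ↦ (m i : ℕ)) then f ⟨m, h⟩ else 0 := by
  rw [sum_dite, sum_const_zero, add_zero]
  exact Fintype.sum_equiv (Equiv.subtypeEquivRight fun _ ↦ (mem_filter_univ _).symm) _ _
    fun _ ↦ rfl

lemma part_le (m : BoxPartition n k) (i : Fin n) : m.part i ≤ k := (m.1 i).is_le

lemma antitone_part (m : BoxPartition n k) : Antitone m.part := m.2

/-- The conjugate partition `m'ⱼ = #{i | mᵢ ≥ j}`; the strict inequality below comes from `j` being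
indexed from `0`. -/
def conj (m : BoxPartition n k) : BoxPartition k n :=
  ⟨fun j ↦ ⟨#{i | (j : ℕ) < m.part i}, Nat.lt_succ_of_le <| card_finset_fin_le _⟩,
    fun _ _ hj ↦ Fin.mk_le_mk.mpr <| card_le_card <| monotone_filter_right _
      fun _ _ h ↦ Nat.lt_of_le_of_lt hj h⟩

lemma part_conj (m : BoxPartition n k) (j : Fin k) :
    m.conj.part j = #{i | (j : ℕ) < m.part i} := rfl

lemma lt_part_conj_iff (m : BoxPartition n k) {i : Fin n} {j : Fin k} :
    (i : ℕ) < m.conj.part j ↔ (j : ℕ) < m.part i := by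
  rw [part_conj]
  exact Fin.lt_card_filter_univ_iff_apply_of_imp (fun i ↦ (j : ℕ) < m.part i)
    fun _ _ h h' ↦ lt_of_lt_of_le h' (m.antitone_part h)

/-- The `β`-numbers `mᵢ + n - i` of a partition. -/
def betaNumber (m : BoxPartition n k) (i : Fin n) : Fin (n + k) :=
  ⟨m.part i + (n - 1 - i), by have := m.part_le i; omega⟩

lemma val_betaNumber (m : BoxPartition n k) (i : Fin n) :
    (m.betaNumber i : ℕ) = m.part i + (n - 1 - i) := rfl

/-- The numbers `n - 1 + j - m'ⱼ`, which are the elements of `{0, …, n + k - 1}` that are not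
`β`-numbers of `m`; equivalently the `β`-numbers of the conjugate partition, read backwards. -/
def coBetaNumber (m : BoxPartition n k) (j : Fin k) : Fin (n + k) :=
  (Fin.cast (Nat.add_comm k n) (m.conj.betaNumber j)).rev

lemma strictAnti_betaNumber (m : BoxPartition n k) : StrictAnti m.betaNumber := by
  intro i j hij
  have := m.antitone_part hij.le
  simp only [betaNumber, Fin.lt_def] at hij ⊢
  omega

lemma strictMono_coBetaNumber (m : BoxPartition n k) : StrictMono m.coBetaNumber :=
  fun _ _ h ↦ Fin.rev_lt_rev.mpr (m.conj.strictAnti_betaNumber h)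

lemma coBetaNumber_lt_betaNumber_iff (m : BoxPartition n k) {i : Fin n} {j : Fin k} :
    m.coBetaNumber j < m.betaNumber i ↔ (j : ℕ) < m.part i := by
  have := m.lt_part_conj_iff (i := i) (j := j)
  have := m.conj.part_le j
  simp only [betaNumber, coBetaNumber, Fin.lt_def, Fin.val_rev, Fin.val_cast]
  omega

lemma betaNumber_lt_coBetaNumber_iff (m : BoxPartition n k) {i : Fin n} {j : Fin k} :
    m.betaNumber i < m.coBetaNumber j ↔ m.part i ≤ j := by
  have := m.lt_part_conj_iff (i := i) (j := j)
  have := m.conj.part_le j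
  simp only [betaNumber, coBetaNumber, Fin.lt_def, Fin.val_rev, Fin.val_cast]
  omega

lemma betaNumber_ne_coBetaNumber (m : BoxPartition n k) (i : Fin n) (j : Fin k) :
    m.betaNumber i ≠ m.coBetaNumber j := by
  rcases lt_or_ge (j : ℕ) (m.part i) with h | h
  · exact (m.coBetaNumber_lt_betaNumber_iff.mpr h).ne'
  · exact (m.betaNumber_lt_coBetaNumber_iff.mpr h).ne

lemma betaNumber_injective : Injective (betaNumber : BoxPartition n k → Fin n → Fin (n + k)) := by
  intro m m' h
  refine Subtype.ext <| funext fun i ↦ Fin.ext ?_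
  exact Nat.add_right_cancel (Fin.ext_iff.mp (congrFun h i))

lemma exists_betaNumber_eq {f : Fin n → Fin (n + k)} (hf : StrictAnti f) :
    ∃ m : BoxPartition n k, m.betaNumber = f := by
  have hanti := antitone_val_add_val_of_strictAnti hf
  have hlower (i : Fin n) : n - 1 ≤ (f i : ℕ) + i :=
    calc n - 1 ≤ f ⟨n - 1, Nat.sub_one_lt i.pos.ne'⟩ + (n - 1) := Nat.le_add_left _ _
      _ ≤ f i + i := hanti (Nat.le_sub_one_of_lt i.is_lt)
  have hupper (i : Fin n) : (f i : ℕ) + i ≤ n + k - 1 :=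
    calc (f i : ℕ) + i ≤ f ⟨0, i.pos⟩ + 0 := hanti (Nat.zero_le _)
      _ ≤ n + k - 1 := Nat.le_sub_one_of_lt (Fin.is_lt _)
  refine ⟨⟨fun i ↦ ⟨(f i : ℕ) + i - (n - 1), by have := hupper i; omega⟩,
    fun i j hij ↦ Nat.sub_le_sub_right (hanti hij) _⟩, funext fun i ↦ Fin.ext ?_⟩
  have := hlower i
  simp only [betaNumber, part]
  omega

lemma exists_range_betaNumber_eq {g : Fin n → Fin (n + k)} (hg : Injective g) :
    ∃ m : BoxPartition n k, Set.range m.betaNumber = Set.range g := by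
  have hcard : #(univ.image g) = n := by rw [card_image_of_injective _ hg, card_fin]
  obtain ⟨m, hm⟩ := exists_betaNumber_eq (k := k) <|
    ((univ.image g).orderEmbOfFin hcard).strictMono.comp_strictAnti Fin.rev_strictAnti
  refine ⟨m, ?_⟩
  rw [hm, Fin.rev_surjective.range_comp, range_orderEmbOfFin, coe_image, coe_univ, Set.image_univ]

/-- The shuffle of a partition: the bijection listing its `β`-numbers in decreasing order, followed
by the remaining elements of `Fin (n + k)` in increasing order. -/
noncomputable def shuffle (m : BoxPartition n k) : Fin n ⊕ Fin k ≃ Fin (n + k) :=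
  Equiv.ofBijective (Sum.elim m.betaNumber m.coBetaNumber) <|
    (Fintype.bijective_iff_injective_and_card _).mpr
      ⟨m.strictAnti_betaNumber.injective.sumElim m.strictMono_coBetaNumber.injective
        m.betaNumber_ne_coBetaNumber, by simp⟩

@[simp]
lemma shuffle_inl (m : BoxPartition n k) (i : Fin n) : m.shuffle (Sum.inl i) = m.betaNumber i := rfl

@[simp]
lemma shuffle_inr (m : BoxPartition n k) (j : Fin k) : m.shuffle (Sum.inr j) = m.coBetaNumber j :=
  rfl

/-- The shuffle of a partition as a permutation of `Fin n ⊕ Fin k`. These permutations are the coset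
representatives over which the Laplace expansion is taken. -/
noncomputable def shufflePerm (m : BoxPartition n k) : Perm (Fin n ⊕ Fin k) :=
  m.shuffle.trans finSumFinEquiv.symm

lemma range_shufflePerm_inl (m : BoxPartition n k) :
    Set.range (m.shufflePerm ∘ Sum.inl) = finSumFinEquiv.symm '' Set.range m.betaNumber :=
  Set.range_comp finSumFinEquiv.symm m.betaNumber

lemma bijective_shufflePerm :
    Bijective fun m : BoxPartition n k ↦ (m.shufflePerm : Perm.ModSumCongr (Fin n) (Fin k)) := by
  constructor
  · intro m m' h
    have hrange := modSumCongr_mk_eq_iff.mp h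
    rw [range_shufflePerm_inl, range_shufflePerm_inl,
      finSumFinEquiv.symm.injective.image_injective.eq_iff,
      m.strictAnti_betaNumber.range_inj m'.strictAnti_betaNumber] at hrange
    exact betaNumber_injective hrange
  · intro q
    obtain ⟨σ, rfl⟩ := QuotientGroup.mk_surjective q
    obtain ⟨m, hm⟩ := exists_range_betaNumber_eq
      (finSumFinEquiv.injective.comp (σ.injective.comp Sum.inl_injective))
    refine ⟨m, modSumCongr_mk_eq_iff.mpr ?_⟩
    rw [range_shufflePerm_inl, hm, ← Set.range_comp]
    congr 1
    ext i
    simp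

lemma sign_shufflePerm (m : BoxPartition n k) :
    m.shufflePerm.sign = ∏ i, (-1) ^ (m.betaNumber i : ℕ) := by
  have hbeta (i : Fin n) : ∏ j ∈ Ioi i,
      (if m.betaNumber i < m.betaNumber j then 1 else -1 : ℤˣ) = (-1) ^ (n - 1 - (i : ℕ)) := by
    rw [← Fin.card_Ioi, ← prod_const]
    exact prod_congr rfl fun j hj ↦ if_neg (m.strictAnti_betaNumber (mem_Ioi.mp hj)).not_gt
  have hcross (i : Fin n) : ∏ j,
      (if m.betaNumber i < m.coBetaNumber j then 1 else -1 : ℤˣ) = (-1) ^ m.part i := by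
    simp only [betaNumber_lt_coBetaNumber_iff, prod_ite, prod_const_one, one_mul, prod_const,
      not_le, Fin.card_filter_val_lt, min_eq_right (m.part_le i)]
  have hcoBeta (i : Fin k) : ∏ j ∈ Ioi i,
      (if m.coBetaNumber i < m.coBetaNumber j then 1 else -1 : ℤˣ) = 1 :=
    prod_eq_one fun j hj ↦ if_pos (m.strictMono_coBetaNumber (mem_Ioi.mp hj))
  have hsign : m.shufflePerm.sign = Perm.sign (finSumFinEquiv.symm.trans m.shuffle) := by
    rw [← Perm.sign_symm_trans_trans m.shufflePerm finSumFinEquiv]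
    simp only [shufflePerm, trans_assoc, symm_trans_self, trans_refl]
  rw [hsign, Perm.sign_eq_prod_prod_Ioi, prod_prod_Ioi_fin_add]
  simp only [trans_apply, finSumFinEquiv_symm_apply_castAdd, finSumFinEquiv_symm_apply_natAdd,
    shuffle_inl, shuffle_inr, hbeta, hcross, hcoBeta, prod_const_one, mul_one, ← prod_mul_distrib,
    ← pow_add, Nat.add_comm, val_betaNumber]

end BoxPartition

section Schur

variable {n k : ℕ} {R : Type*} [CommRing R]

/-- The Vandermonde product `V(w)`, with the sign for which it is `det (w_j ^ (n - i))`. -/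
def vandermondeProd (w : Fin n → R) : R := ∏ i, ∏ j ∈ Ioi i, (w i - w j)

/-- The alternant `det (w_j ^ (m_i + n - i))`, the numerator of Cauchy's bialternant formula for
the Schur polynomial of `m`. -/
def alternant (m : Fin n → ℕ) (w : Fin n → R) : R :=
  Matrix.det (Matrix.of fun i j : Fin n ↦ w j ^ (m i + (n - 1 - (i : ℕ))))

lemma alternant_neg (m : Fin n → ℕ) (w : Fin n → R) :
    alternant m (-w) = (∏ i, (-1) ^ (m i + (n - 1 - (i : ℕ)))) * alternant m w := by
  rw [alternant, alternant, ← Matrix.det_mul_column]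
  simp only [Pi.neg_apply, Matrix.of_apply, ← neg_pow]

/-- The matrix with columns `(-uᵢ) ^ r` and `vⱼ ^ (n + k - 1 - r)`, where `r` indexes the rows. -/
def cauchyMatrix (u : Fin n → R) (v : Fin k → R) : Matrix (Fin (n + k)) (Fin (n + k)) R :=
  (Matrix.projVandermonde (Fin.append (-u) 1) (Fin.append 1 v)).transpose

lemma det_cauchyMatrix (u : Fin n → R) (v : Fin k → R) :
    (cauchyMatrix u v).det =
      vandermondeProd u * (∏ i, ∏ j, (1 + u i * v j)) * vandermondeProd v := by
  rw [cauchyMatrix, Matrix.det_transpose, Matrix.det_projVandermonde, prod_prod_Ioi_fin_add]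
  simp only [Fin.append_left, Fin.append_right, Pi.neg_apply, Pi.one_apply, vandermondeProd,
    mul_one, one_mul, neg_mul, sub_neg_eq_add, neg_add_eq_sub]

lemma det_cauchyMatrix_eq_sum (u : Fin n → R) (v : Fin k → R) :
    (cauchyMatrix u v).det =
      ∑ m : BoxPartition n k, alternant m.part u * alternant m.conj.part v := by
  rw [← Matrix.det_submatrix_equiv_self finSumFinEquiv,
    det_eq_sum_sign_mul_det_mul_det BoxPartition.bijective_shufflePerm]
  refine Fintype.sum_congr _ _ fun m ↦ ?_
  set M := (cauchyMatrix u v).submatrix finSumFinEquiv finSumFinEquiv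
  have hu : (M.submatrix (m.shufflePerm ∘ Sum.inl) Sum.inl).det = alternant m.part (-u) := by
    rw [alternant]
    congr 1
    ext i j
    simp [M, cauchyMatrix, BoxPartition.shufflePerm, BoxPartition.betaNumber,
      Matrix.projVandermonde_apply]
  have hv : (M.submatrix (m.shufflePerm ∘ Sum.inr) Sum.inr).det = alternant m.conj.part v := by
    rw [alternant]
    congr 1
    ext i j
    simp [M, cauchyMatrix, BoxPartition.shufflePerm, BoxPartition.coBetaNumber,
      BoxPartition.betaNumber, Matrix.projVandermonde_apply, Fin.rev_rev]
  have hsign : (m.shufflePerm.sign : R) * ∏ i, (-1) ^ (m.part i + (n - 1 - (i : ℕ))) = 1 := by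
    simp [m.sign_shufflePerm, BoxPartition.betaNumber, ← prod_mul_distrib, ← mul_pow]
  rw [hu, hv, alternant_neg, ← mul_assoc, hsign, one_mul]

theorem vandermondeProd_mul_prod_one_add_mul (u : Fin n → R) (v : Fin k → R) :
    vandermondeProd u * (∏ i, ∏ j, (1 + u i * v j)) * vandermondeProd v =
      ∑ m : BoxPartition n k, alternant m.part u * alternant m.conj.part v :=
  (det_cauchyMatrix u v).symm.trans (det_cauchyMatrix_eq_sum u v)

-- The two orientations of the Vandermonde product differ by a sign depending only on `n`, which is
-- why it takes a product of two of them to identify them.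
lemma prod_filter_lt_sub_mul_prod_filter_lt_sub (u v : Fin n → R) :
    (∏ p : Fin n × Fin n with p.1 < p.2, (u p.2 - u p.1)) *
      (∏ p : Fin n × Fin n with p.1 < p.2, (v p.2 - v p.1)) =
      vandermondeProd u * vandermondeProd v := by
  simp only [vandermondeProd, ← filter_lt_eq_Ioi, prod_filter, Fintype.prod_prod_type,
    ← prod_mul_distrib]
  refine Fintype.prod_congr _ _ fun i ↦ Fintype.prod_congr _ _ fun j ↦ ?_
  split_ifs <;> ring

end Schur

section Field

variable {n k : ℕ} {K : Type*} [Field K]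

/-- The value at `w` of the Schur polynomial of `m`, as Cauchy's bialternant. It is the junk value
`0` when two of the `wᵢ` coincide. -/
def schur (m : Fin n → ℕ) (w : Fin n → K) : K := alternant m w / vandermondeProd w

lemma vandermondeProd_ne_zero {w : Fin n → K} (hw : Injective w) : vandermondeProd w ≠ 0 :=
  prod_ne_zero_iff.mpr fun _ _ ↦ prod_ne_zero_iff.mpr fun _ hj ↦
    sub_ne_zero.mpr (hw.ne (mem_Ioi.mp hj).ne)

lemma schur_mul_schur (l m : Fin n → ℕ) (u v : Fin n → K) :
    schur l u * schur m v =
      alternant l u / (∏ p : Fin n × Fin n with p.1 < p.2, (u p.2 - u p.1)) *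
        (alternant m v / ∏ p : Fin n × Fin n with p.1 < p.2, (v p.2 - v p.1)) := by
  rw [schur, schur, div_mul_div_comm, div_mul_div_comm, prod_filter_lt_sub_mul_prod_filter_lt_sub]

end Field

end DualCauchy

open DualCauchy in
theorem stmt19_general {n k : ℕ} {K : Type*} [Field K] {u : Fin n → K} {v : Fin k → K}
    (hu : Function.Injective u) (hv : Function.Injective v) :
    ∏ i, ∏ j, (1 + u i * v j) =
      ∑ m : BoxPartition n k, schur m.part u * schur m.conj.part v := by
  have hVu := vandermondeProd_ne_zero hu
  have hVv := vandermondeProd_ne_zero hv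
  simp only [schur, div_mul_div_comm, ← Finset.sum_div]
  rw [← vandermondeProd_mul_prod_one_add_mul, eq_div_iff (mul_ne_zero hVu hVv)]
  ring

/-- Dual Cauchy product identity: `∏_{i,j=1}^n (1 + u_i v_j) = ∑_m s_m(u) s_{m'}(v)`,
the sum over partitions `m` fitting in an `n×n` box, with `m'` the conjugate partition
`m'_j = #{i : m_i ≥ j}`. Stated in the fraction field of `ℤ[u,v]`, where the Schur
polynomial is Cauchy's bialternant `s_m(u) = det(u_j^{m_i+n-i}) / V(u)`. -/
theorem stmt19 (n : ℕ) (hn : 1 ≤ n) :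
    let K := FractionRing (MvPolynomial (Fin n ⊕ Fin n) ℤ)
    let U : Fin n → K := fun i =>
      algebraMap (MvPolynomial (Fin n ⊕ Fin n) ℤ) K (MvPolynomial.X (Sum.inl i))
    let V : Fin n → K := fun j =>
      algebraMap (MvPolynomial (Fin n ⊕ Fin n) ℤ) K (MvPolynomial.X (Sum.inr j))
    let vdm : (Fin n → K) → K := fun w =>
      ∏ p ∈ Finset.univ.filter (fun p : Fin n × Fin n => p.1 < p.2), (w p.2 - w p.1)
    let schur : (Fin n → ℕ) → (Fin n → K) → K := fun m w =>
      Matrix.det (Matrix.of fun i j : Fin n => w j ^ (m i + (n - 1 - (i : ℕ)))) / vdm w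
    (∏ i : Fin n, ∏ j : Fin n, (1 + U i * V j)) =
    ∑ m : Fin n → Fin (n + 1),
      if Antitone (fun i => (m i : ℕ)) then
        schur (fun i => (m i : ℕ)) U *
        schur (fun j => (Finset.univ.filter
          (fun i : Fin n => (j : ℕ) + 1 ≤ (m i : ℕ))).card) V
      else 0 := by
  intro K U V vdm schur
  have hU : Function.Injective U :=
    (IsFractionRing.injective _ K).comp (MvPolynomial.X_injective.comp Sum.inl_injective)
  have hV : Function.Injective V :=
    (IsFractionRing.injective _ K).comp (MvPolynomial.X_injective.comp Sum.inr_injective)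
  simp only [stmt19_general hU hV, DualCauchy.schur_mul_schur]
  exact DualCauchy.BoxPartition.sum_eq_sum_dite _
end
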